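/- Let γ be an admissible curve in G¹₃ with ε = +1 (i.e. y''² > z''² on I). Then the equiform AW(3) identity ⟨Q₁(x), Q₁(x)⟩·Q₃(x) = ⟨Q₃(x), Q₁(x)⟩·Q₁(x) holds for all x ∈ I (with ⟨·,·⟩ the pseudo-Galilean scalar product) if and only if 𝒯° − 3𝒦𝒯 ≡ 0 on I. -/

import Mathlib

noncomputable section

open Real

/-- Model of the pseudo-Galilean space `G¹₃` as `ℝ³`. -/
abbrev V3 := ℝ × ℝ × ℝ

/-- The pseudo-Galilean scalar product on `ℝ³`. -/
def pgInner (u v : V3) : ℝ :=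
  if u.1 ≠ 0 ∨ v.1 ≠ 0 then u.1 * v.1 else u.2.1 * v.2.1 - u.2.2 * v.2.2

/-- Curvature of the admissible curve `x ↦ (x, y x, z x)`. -/
def curv (y z : ℝ → ℝ) (x : ℝ) : ℝ :=
  Real.sqrt |(deriv (deriv y) x) ^ 2 - (deriv (deriv z) x) ^ 2|

/-- Torsion of the admissible curve `x ↦ (x, y x, z x)`. -/
def tors (y z : ℝ → ℝ) (x : ℝ) : ℝ :=
  (deriv (deriv y) x * deriv (deriv (deriv z)) x -
    deriv (deriv (deriv y)) x * deriv (deriv z) x) / (curv y z x) ^ 2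

/-- Radius of curvature `ρ = 1/κ`. -/
def rho (y z : ℝ → ℝ) (x : ℝ) : ℝ := 1 / curv y z x

/-- Equiform curvature `𝒦 = ρ'`. -/
def eqK (y z : ℝ → ℝ) (x : ℝ) : ℝ := deriv (rho y z) x

/-- Equiform torsion `𝒯 = ρ·τ`. -/
def eqT (y z : ℝ → ℝ) (x : ℝ) : ℝ := rho y z x * tors y z x

/-- Frenet tangent `e₁ = (1, y', z')`. -/
def e1 (y z : ℝ → ℝ) (x : ℝ) : V3 := (1, deriv y x, deriv z x)

/-- Frenet principal normal `e₂ = (1/κ)(0, y'', z'')`. -/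
def e2 (y z : ℝ → ℝ) (x : ℝ) : V3 :=
  (0, deriv (deriv y) x / curv y z x, deriv (deriv z) x / curv y z x)

/-- Frenet binormal `e₃ = (1/κ)(0, ε·z'', ε·y'')`. -/
def e3 (y z : ℝ → ℝ) (ε : ℝ) (x : ℝ) : V3 :=
  (0, ε * deriv (deriv z) x / curv y z x, ε * deriv (deriv y) x / curv y z x)

/-- Equiform tangent `T = ρ·e₁`. -/
def Tv (y z : ℝ → ℝ) (x : ℝ) : V3 := rho y z x • e1 y z x

/-- Equiform principal normal `N = ρ·e₂`. -/
def Nv (y z : ℝ → ℝ) (x : ℝ) : V3 := rho y z x • e2 y z x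

/-- Equiform binormal `B = ρ·e₃`. -/
def Bv (y z : ℝ → ℝ) (ε : ℝ) (x : ℝ) : V3 := rho y z x • e3 y z ε x

/-- Derivative with respect to the equiform parameter: `f° = ρ·f'`. -/
def eqD {E : Type*} [NormedAddCommGroup E] [NormedSpace ℝ E]
    (y z : ℝ → ℝ) (f : ℝ → E) (x : ℝ) : E := rho y z x • deriv f x

/-- `Q₁ = ρ⁻²·N`. -/
def Q1 (y z : ℝ → ℝ) (x : ℝ) : V3 := ((rho y z x) ^ (-2 : ℤ)) • Nv y z x

/-- `Q₂ = ρ⁻³·(−𝒦N + 𝒯B)`. -/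
def Q2 (y z : ℝ → ℝ) (ε : ℝ) (x : ℝ) : V3 :=
  ((rho y z x) ^ (-3 : ℤ)) • ((-(eqK y z x)) • Nv y z x + (eqT y z x) • Bv y z ε x)

/-- `Q₃ = ρ⁻⁴·[(2𝒦² + 𝒯² − 𝒦°)N + (𝒯° − 3𝒦𝒯)B]`. -/
def Q3 (y z : ℝ → ℝ) (ε : ℝ) (x : ℝ) : V3 :=
  ((rho y z x) ^ (-4 : ℤ)) •
    ((2 * (eqK y z x) ^ 2 + (eqT y z x) ^ 2 - eqD y z (eqK y z) x) • Nv y z x +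
      (eqD y z (eqT y z) x - 3 * eqK y z x * eqT y z x) • Bv y z ε x)

/-!
The vectors `N` and `B` lie in the plane `u₁ = 0`, on which the pseudo-Galilean scalar product is
the Lorentzian form `u₂v₂ − u₃v₃`, and there they are orthogonal and non-null. As `Q₁` is a nonzero
multiple of `N`, the vector `⟨Q₁,Q₁⟩Q₃ − ⟨Q₃,Q₁⟩Q₁` only sees the `B`-component of `Q₃`, which is
`ρ⁻⁴(𝒯° − 3𝒦𝒯)`.
-/

section BilinForm

variable {R M : Type*} [CommRing R] [AddCommGroup M] [Module R M]
  {Φ : LinearMap.BilinForm R M} {n b : M}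

theorem bilinForm_self_smul_sub_of_ortho (hbn : Φ b n = 0) (q α β : R) :
    Φ (q • n) (q • n) • (α • n + β • b) - Φ (α • n + β • b) (q • n) • q • n =
      (q ^ 2 * Φ n n * β) • b := by
  simp only [map_add, map_smul, LinearMap.add_apply, LinearMap.smul_apply, smul_eq_mul, hbn]
  module

theorem bilinForm_self_smul_eq_iff_of_ortho [IsDomain R] [Module.IsTorsionFree R M]
    (hbn : Φ b n = 0) (hn : Φ n n ≠ 0) (hb : b ≠ 0) {q : R} (hq : q ≠ 0) (α β : R) :
    Φ (q • n) (q • n) • (α • n + β • b) = Φ (α • n + β • b) (q • n) • q • n ↔ β = 0 := by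
  rw [← sub_eq_zero, bilinForm_self_smul_sub_of_ortho hbn]
  simp [hq, hn, hb]

end BilinForm

/-- The Lorentzian form `u₂v₂ − u₃v₃`, extended to a bilinear form on all of `ℝ³`. It agrees with
`pgInner`, which is not bilinear, on the plane `u₁ = 0`. -/
def lorentzForm : LinearMap.BilinForm ℝ V3 :=
  LinearMap.mk₂ ℝ (fun u v => u.2.1 * v.2.1 - u.2.2 * v.2.2)
    (fun u u' v => by simp only [Prod.snd_add, Prod.fst_add]; ring)
    (fun c u v => by simp only [Prod.smul_snd, Prod.smul_fst, smul_eq_mul]; ring)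
    (fun u v v' => by simp only [Prod.snd_add, Prod.fst_add]; ring)
    (fun c u v => by simp only [Prod.smul_snd, Prod.smul_fst, smul_eq_mul]; ring)

theorem lorentzForm_apply (u v : V3) :
    lorentzForm u v = u.2.1 * v.2.1 - u.2.2 * v.2.2 := rfl

theorem pgInner_eq_lorentzForm {u v : V3} (hu : u.1 = 0) (hv : v.1 = 0) :
    pgInner u v = lorentzForm u v := by
  simp [pgInner, lorentzForm_apply, hu, hv]

section Frame

variable (y z : ℝ → ℝ) (ε x : ℝ)

theorem Q1_fst : (Q1 y z x).1 = 0 := by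
  simp [Q1, Nv, e2]

theorem Q3_fst : (Q3 y z ε x).1 = 0 := by
  simp [Q3, Nv, Bv, e2, e3]

theorem Q3_eq_smul_Nv_add_smul_Bv :
    Q3 y z ε x =
      (rho y z x ^ (-4 : ℤ) * (2 * eqK y z x ^ 2 + eqT y z x ^ 2 - eqD y z (eqK y z) x)) •
          Nv y z x +
        (rho y z x ^ (-4 : ℤ) * (eqD y z (eqT y z) x - 3 * eqK y z x * eqT y z x)) •
          Bv y z ε x := by
  rw [Q3, smul_add, smul_smul, smul_smul]

theorem lorentzForm_Nv_Nv :
    lorentzForm (Nv y z x) (Nv y z x) =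
      rho y z x ^ 4 * (deriv (deriv y) x ^ 2 - deriv (deriv z) x ^ 2) := by
  simp only [lorentzForm_apply, Nv, e2, rho, Prod.smul_mk, smul_eq_mul]
  ring

theorem lorentzForm_Bv_Bv :
    lorentzForm (Bv y z ε x) (Bv y z ε x) = -ε ^ 2 * lorentzForm (Nv y z x) (Nv y z x) := by
  simp only [lorentzForm_apply, Bv, Nv, e2, e3, Prod.smul_mk, smul_eq_mul]
  ring

theorem lorentzForm_Bv_Nv : lorentzForm (Bv y z ε x) (Nv y z x) = 0 := by
  simp only [lorentzForm_apply, Bv, Nv, e2, e3, Prod.smul_mk, smul_eq_mul]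
  ring

end Frame

section Admissible

variable {y z : ℝ → ℝ} {ε x : ℝ}

theorem rho_ne_zero (hadm : deriv (deriv y) x ^ 2 - deriv (deriv z) x ^ 2 ≠ 0) :
    rho y z x ≠ 0 :=
  one_div_ne_zero (Real.sqrt_ne_zero'.mpr (abs_pos.mpr hadm))

theorem lorentzForm_Nv_Nv_ne_zero (hadm : deriv (deriv y) x ^ 2 - deriv (deriv z) x ^ 2 ≠ 0) :
    lorentzForm (Nv y z x) (Nv y z x) ≠ 0 := by
  rw [lorentzForm_Nv_Nv]
  exact mul_ne_zero (pow_ne_zero 4 (rho_ne_zero hadm)) hadm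

theorem Bv_ne_zero (hε : ε ≠ 0) (hadm : deriv (deriv y) x ^ 2 - deriv (deriv z) x ^ 2 ≠ 0) :
    Bv y z ε x ≠ 0 := by
  intro hB
  have hBB := lorentzForm_Bv_Bv y z ε x
  rw [hB, map_zero, eq_comm] at hBB
  exact mul_ne_zero (neg_ne_zero.mpr (pow_ne_zero 2 hε)) (lorentzForm_Nv_Nv_ne_zero hadm) hBB

theorem pgInner_Q1_smul_Q3_eq_iff (hε : ε ≠ 0)
    (hadm : deriv (deriv y) x ^ 2 - deriv (deriv z) x ^ 2 ≠ 0) :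
    pgInner (Q1 y z x) (Q1 y z x) • Q3 y z ε x = pgInner (Q3 y z ε x) (Q1 y z x) • Q1 y z x ↔
      eqD y z (eqT y z) x - 3 * eqK y z x * eqT y z x = 0 := by
  have hρ : rho y z x ≠ 0 := rho_ne_zero hadm
  rw [pgInner_eq_lorentzForm (Q1_fst y z x) (Q1_fst y z x),
    pgInner_eq_lorentzForm (Q3_fst y z ε x) (Q1_fst y z x), Q3_eq_smul_Nv_add_smul_Bv, Q1,
    bilinForm_self_smul_eq_iff_of_ortho (lorentzForm_Bv_Nv y z ε x)
      (lorentzForm_Nv_Nv_ne_zero hadm) (Bv_ne_zero hε hadm) (zpow_ne_zero _ hρ),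
    mul_eq_zero_iff_left (zpow_ne_zero _ hρ)]

end Admissible

theorem pg_AW3_iff_general (I : Set ℝ) (y z : ℝ → ℝ) (ε : ℝ)
    (hadm : ∀ x ∈ I, deriv (deriv y) x ^ 2 - deriv (deriv z) x ^ 2 ≠ 0)
    (hε : ∀ x ∈ I, ε = Real.sign (deriv (deriv y) x ^ 2 - deriv (deriv z) x ^ 2)) :
    (∀ x ∈ I,
      pgInner (Q1 y z x) (Q1 y z x) • Q3 y z ε x =
        pgInner (Q3 y z ε x) (Q1 y z x) • Q1 y z x) ↔
      ∀ x ∈ I, eqD y z (eqT y z) x - 3 * eqK y z x * eqT y z x = 0 :=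
  forall₂_congr fun x hx =>
    pgInner_Q1_smul_Q3_eq_iff (hε x hx ▸ Real.sign_eq_zero_iff.not.mpr (hadm x hx)) (hadm x hx)

/-- for `ε = +1`, the equiform AW(3) identity
`⟨Q₁,Q₁⟩·Q₃ = ⟨Q₃,Q₁⟩·Q₁` holds on `I` iff `𝒯° − 3𝒦𝒯 ≡ 0` on `I`. -/
theorem pg_AW3_iff (I : Set ℝ) (y z : ℝ → ℝ)
    (hI : IsOpen I) (hy : ContDiff ℝ (⊤ : ℕ∞) y) (hz : ContDiff ℝ (⊤ : ℕ∞) z)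
    (hsign : ∀ x ∈ I, 0 < (deriv (deriv y) x) ^ 2 - (deriv (deriv z) x) ^ 2) :
    (∀ x ∈ I,
      (pgInner (Q1 y z x) (Q1 y z x)) • Q3 y z 1 x =
        (pgInner (Q3 y z 1 x) (Q1 y z x)) • Q1 y z x) ↔
      (∀ x ∈ I, eqD y z (eqT y z) x - 3 * eqK y z x * eqT y z x = 0) :=
  pg_AW3_iff_general I y z 1 (fun x hx => (hsign x hx).ne')
    fun x hx => (Real.sign_of_pos (hsign x hx)).symm
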